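/- Let (R, m) be a Noetherian local ring, S := R[X_1,…,X_n] a graded polynomial ring over R with deg X_i > 0 for all i (and R in degree 0), and M a finitely generated graded S-module. Then for every q ≥ 1, Supp_S( Tor_q^R(M, R/m) ) ⊆ Supp_S( Tor_1^R(M, R/m) ). -/

import Mathlib

noncomputable section TorCore

variable (R : Type) [CommRing R] (S : Type) [CommRing S] [Algebra R S]
variable (M : Type) [AddCommGroup M] [Module R M] [Module S M] [IsScalarTower R S M]
variable (F : ℕ → Type) [∀ q, AddCommGroup (F q)] [∀ q, Module R (F q)]
variable (dF : ∀ q : ℕ, F (q + 1) →ₗ[R] F q)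

/-- The differential `M ⊗ F_{q+1} → M ⊗ F_q` of the complex `M ⊗_R F_•`, as a map of
`S`-modules (through the `S`-module structure of `M`). -/
def torD (q : ℕ) : TensorProduct R M (F (q + 1)) →ₗ[S] TensorProduct R M (F q) :=
  TensorProduct.AlgebraTensorModule.map (LinearMap.id : M →ₗ[S] M) (dF q)

/-- The outgoing differential `M ⊗ F_q → M ⊗ F_{q-1}` (the zero map for `q = 0`). -/
def torDout : (q : ℕ) → (TensorProduct R M (F q) →ₗ[S] TensorProduct R M (F (q - 1)))
  | 0 => 0
  | (q + 1) => torD R S M F dF q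

/-- `Tor_q^R(M, N)` computed from a given free resolution `F_• → N` of `N`, as an
`S`-module: the homology `ker(M ⊗ F_q → M ⊗ F_{q-1}) / im(M ⊗ F_{q+1} → M ⊗ F_q)`. -/
def torMod (q : ℕ) : Type :=
  ↥(LinearMap.ker (torDout R S M F dF q)) ⧸
    (Submodule.comap (LinearMap.ker (torDout R S M F dF q)).subtype
      (LinearMap.range (torD R S M F dF q)))

instance (q : ℕ) : AddCommGroup (torMod R S M F dF q) := by unfold torMod; infer_instance
instance (q : ℕ) : Module S (torMod R S M F dF q) := by unfold torMod; infer_instance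

end TorCore

open TensorProduct in
theorem aux_mv {R N A B G K : Type} [CommRing R] [AddCommGroup N] [Module R N]
    [AddCommGroup A] [Module R A] [AddCommGroup B] [Module R B] [AddCommGroup G] [Module R G]
    [AddCommGroup K] [Module R K]
    (i : A →ₗ[R] B) (φ : G →ₗ[R] B) (p : K →ₗ[R] A) (j : K →ₗ[R] G)
    (hex : Function.Exact (p.prod j) (i.coprod φ)) (hs : Function.Surjective (i.coprod φ))
    (x : N ⊗[R] A) (hx : i.lTensor N x = 0) :
    ∃ κ : N ⊗[R] K, p.lTensor N κ = x ∧ j.lTensor N κ = 0 := by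
  have h := lTensor_exact N hex hs
  have h1 : (i.coprod φ).lTensor N ((LinearMap.inl R A G).lTensor N x) = 0 := by
    rw [← LinearMap.lTensor_comp_apply, LinearMap.coprod_inl, hx]
  obtain ⟨κ, hκ⟩ := (h _).1 h1
  refine ⟨κ, ?_, ?_⟩
  · have := congrArg ((LinearMap.fst R A G).lTensor N) hκ
    rw [← LinearMap.lTensor_comp_apply, ← LinearMap.lTensor_comp_apply, LinearMap.fst_prod,
      LinearMap.fst_comp_inl, LinearMap.lTensor_id] at this
    exact this
  · have := congrArg ((LinearMap.snd R A G).lTensor N) hκ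
    rw [← LinearMap.lTensor_comp_apply, ← LinearMap.lTensor_comp_apply, LinearMap.snd_prod,
      LinearMap.snd_comp_inl, LinearMap.lTensor_zero] at this
    exact this

open TensorProduct in
/-- one-step: from injectivity for `K ⊆ G` to injectivity for `i : A → B`. -/
theorem aux_step {R N A B G : Type} [CommRing R] [AddCommGroup N] [Module R N]
    [AddCommGroup A] [Module R A] [AddCommGroup B] [Module R B] [AddCommGroup G] [Module R G]
    (K : Submodule R G) (hK : Function.Injective (K.subtype.lTensor N))
    (i : A →ₗ[R] B) (hi : Function.Injective i) (φ : G →ₗ[R] B)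
    (hφ : ∀ g, g ∈ K ↔ φ g ∈ LinearMap.range i)
    (hs : ∀ b, ∃ a g, i a + φ g = b) : Function.Injective (i.lTensor N) := by
  rw [injective_iff_map_eq_zero]
  intro x hx
  let e := LinearEquiv.ofInjective i hi
  let ψ : K →ₗ[R] LinearMap.range i := (φ.comp K.subtype).codRestrict _ (fun k => (hφ k).1 k.2)
  let p : K →ₗ[R] A := -(e.symm.toLinearMap.comp ψ)
  have hip : ∀ k : K, i (p k) = - φ k := by
    intro k
    have : i (e.symm (ψ k)) = (e (e.symm (ψ k)) : B) := rfl
    simp only [p, LinearMap.neg_apply, map_neg, LinearMap.comp_apply, LinearEquiv.coe_coe]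
    rw [this, LinearEquiv.apply_symm_apply]; rfl
  obtain ⟨κ, h1, h2⟩ := aux_mv i φ p K.subtype (N := N) (by
    rintro ⟨a, g⟩
    simp only [LinearMap.coprod_apply, Set.mem_range]
    constructor
    · intro h
      have hg : g ∈ K := (hφ g).2 ⟨-a, by rw [map_neg]; exact neg_eq_of_add_eq_zero_right h⟩
      refine ⟨⟨g, hg⟩, Prod.ext (hi ?_) rfl⟩
      change i (p ⟨g, hg⟩) = i a
      rw [hip]
      exact (eq_neg_of_add_eq_zero_left h).symm
    · rintro ⟨k, hk⟩
      have e1 : p k = a := congrArg Prod.fst hk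
      have e2 : (k : G) = g := congrArg Prod.snd hk
      rw [← e1, ← e2, hip]; simp) (by
    intro b
    obtain ⟨a, g, h⟩ := hs b
    exact ⟨(a, g), h⟩) x hx
  rw [← h1, hK (h2.trans (map_zero _).symm), map_zero]

open TensorProduct in
theorem aux_finlen {R N : Type} [CommRing R] [IsNoetherianRing R] [IsLocalRing R]
    [AddCommGroup N] [Module R N]
    (hm : Function.Injective ((IsLocalRing.maximalIdeal R).subtype.lTensor N))
    (j : ℕ) (J : Ideal R) (hJ : IsLocalRing.maximalIdeal R ^ j ≤ J) :
    Function.Injective (J.subtype.lTensor N) := by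
  induction J using WellFoundedGT.induction with
  | ind J ih =>
  by_cases hJt : J = ⊤
  · subst hJt
    exact (LinearEquiv.lTensor N (Submodule.topEquiv (R := R) (M := R))).injective
  classical
  have hex : ∃ j, IsLocalRing.maximalIdeal R ^ j ≤ J := ⟨j, hJ⟩
  have hmin := Nat.find_spec hex
  have h0 : Nat.find hex ≠ 0 := by
    intro h
    rw [h, pow_zero, Ideal.one_eq_top, top_le_iff] at hmin
    exact hJt hmin
  obtain ⟨l, hl⟩ := Nat.exists_eq_succ_of_ne_zero h0
  have hnot := Nat.find_min hex (m := l) (by omega)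
  rw [hl, Nat.succ_eq_add_one] at hmin
  obtain ⟨x, hxm, hxJ⟩ := SetLike.not_le_iff_exists.1 hnot
  have hmx : ∀ r ∈ IsLocalRing.maximalIdeal R, r * x ∈ J := fun r hr => hmin (by
    rw [pow_succ']; exact Ideal.mul_mem_mul hr hxm)
  let J' : Ideal R := J ⊔ Ideal.span {x}
  have hle : J ≤ J' := le_sup_left
  have hxJ' : x ∈ J' := Ideal.mem_sup_right (Ideal.mem_span_singleton_self x)
  have hlt : J < J' := lt_of_le_of_ne hle (fun h => hxJ (h ▸ hxJ'))
  have h1 := ih J' hlt (hJ.trans hle)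
  have h2 : Function.Injective ((Submodule.inclusion hle).lTensor N) := by
    refine aux_step (IsLocalRing.maximalIdeal R) hm _ (Submodule.inclusion_injective hle)
      (LinearMap.toSpanSingleton R J' ⟨x, hxJ'⟩) ?_ ?_
    · intro g
      rw [Submodule.range_inclusion]
      simp only [LinearMap.toSpanSingleton_apply, Submodule.mem_comap, Submodule.subtype_apply,
        Submodule.coe_smul, smul_eq_mul]
      refine ⟨hmx g, fun h => ?_⟩
      rw [IsLocalRing.mem_maximalIdeal, mem_nonunits_iff]
      intro hu
      exact hxJ ((Ideal.unit_mul_mem_iff_mem J hu).1 h)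
    · rintro ⟨b, hb⟩
      obtain ⟨a, ha, c, hc, rfl⟩ := Submodule.mem_sup.1 hb
      obtain ⟨r, rfl⟩ := Ideal.mem_span_singleton'.1 hc
      exact ⟨⟨a, ha⟩, r, rfl⟩
  have : J.subtype = J'.subtype ∘ₗ Submodule.inclusion hle := rfl
  rw [this, LinearMap.lTensor_comp]
  exact h1.comp h2

open TensorProduct in
theorem aux_flat {R A N : Type} [CommRing R] [IsNoetherianRing R] [IsLocalRing R]
    [CommRing A] [IsNoetherianRing A] [IsLocalRing A] [Algebra R A]
    (hloc : ∀ r ∈ IsLocalRing.maximalIdeal R, algebraMap R A r ∈ IsLocalRing.maximalIdeal A)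
    [AddCommGroup N] [Module R N] [Module A N] [IsScalarTower R A N] [Module.Finite A N]
    (hm : Function.Injective ((IsLocalRing.maximalIdeal R).subtype.lTensor N)) :
    Module.Flat R N := by
  rw [Module.Flat.iff_lTensor_injective']
  intro I
  rw [injective_iff_map_eq_zero]
  intro x hx
  have key : x ∈ (⨅ i : ℕ, IsLocalRing.maximalIdeal A ^ i • ⊤ : Submodule A (N ⊗[R] I)) := by
    rw [Submodule.mem_iInf]
    intro n
    obtain ⟨k, hk⟩ := (IsLocalRing.maximalIdeal R).exists_pow_inf_eq_pow_smul (M := R) I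
    let Q := IsLocalRing.maximalIdeal R ^ (n + k)
    have hQ : ∀ a ∈ I ⊓ Q, a ∈ IsLocalRing.maximalIdeal R ^ n * I := by
      intro a ha
      have h := hk (n + k) (by omega)
      have : a ∈ IsLocalRing.maximalIdeal R ^ (n + k) • (⊤ : Submodule R R) ⊓ I := by
        refine ⟨?_, ha.1⟩
        simpa using ha.2
      rw [h, Nat.add_sub_cancel] at this
      exact Submodule.smul_mono le_rfl inf_le_right this
    have hinj := aux_finlen hm (n + k) (I ⊔ Q) le_sup_right
    have hx' : (Submodule.inclusion (le_sup_left : I ≤ I ⊔ Q)).lTensor N x = 0 := by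
      apply hinj
      rw [map_zero, ← LinearMap.lTensor_comp_apply]
      exact hx
    obtain ⟨κ, h1, -⟩ := aux_mv (Submodule.inclusion (le_sup_left : I ≤ I ⊔ Q))
      (Submodule.inclusion (le_sup_right : Q ≤ I ⊔ Q))
      (Submodule.inclusion (inf_le_left : I ⊓ Q ≤ I))
      (-(Submodule.inclusion (inf_le_right : I ⊓ Q ≤ Q))) (N := N) (by
        rintro ⟨⟨a, ha⟩, ⟨b, hb⟩⟩
        simp only [LinearMap.coprod_apply, Set.mem_range, Subtype.ext_iff, Submodule.coe_add,
          Submodule.coe_inclusion, Submodule.coe_zero]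
        constructor
        · intro h
          have hab : a = -b := eq_neg_of_add_eq_zero_left h
          refine ⟨⟨a, ha, by rw [hab]; exact neg_mem hb⟩, Prod.ext rfl (Subtype.ext ?_)⟩
          change -a = b
          rw [hab, neg_neg]
        · rintro ⟨c, hc⟩
          have e1 : (c : R) = a := congrArg (fun y => (y.1 : R)) hc
          have e2 : -(c : R) = b := congrArg (fun y => (y.2 : R)) hc
          rw [← e1, ← e2, add_neg_cancel]) (by
        rintro ⟨b, hb⟩
        obtain ⟨a, ha, c, hc, rfl⟩ := Submodule.mem_sup.1 hb
        exact ⟨(⟨a, ha⟩, ⟨c, hc⟩), rfl⟩) x hx'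
    rw [← h1]
    clear h1 hx' hx
    have hpow : ∀ r ∈ IsLocalRing.maximalIdeal R ^ n,
        algebraMap R A r ∈ IsLocalRing.maximalIdeal A ^ n := by
      intro r hr
      have h3 := Ideal.mem_map_of_mem (algebraMap R A) hr
      rw [Ideal.map_pow] at h3
      exact Ideal.pow_right_mono (Ideal.map_le_iff_le_comap.2 hloc) n h3
    have hmulI : IsLocalRing.maximalIdeal R ^ n * I ≤ I := Ideal.mul_le_right
    induction κ with
    | zero => rw [map_zero]; exact zero_mem _
    | add a b ha hb => rw [map_add]; exact add_mem ha hb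
    | tmul y a =>
      obtain ⟨a, ha⟩ := a
      rw [LinearMap.lTensor_tmul]
      have h4 : ∀ a (_ : a ∈ IsLocalRing.maximalIdeal R ^ n * I) (haI : a ∈ I),
          y ⊗ₜ[R] (⟨a, haI⟩ : I) ∈
            (IsLocalRing.maximalIdeal A ^ n • ⊤ : Submodule A (N ⊗[R] I)) := by
        intro a ha
        induction ha using Submodule.mul_induction_on' with
        | mem_mul_mem r hr c hc =>
          intro haI
          have : (⟨r * c, haI⟩ : I) = r • ⟨c, hc⟩ := rfl
          rw [this, TensorProduct.tmul_smul, ← algebraMap_smul A r (y ⊗ₜ[R] (⟨c, hc⟩ : I))]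
          exact Submodule.smul_mem_smul (hpow r hr) trivial
        | add a ha b hb h5 h6 =>
          intro haI
          have haI' : a ∈ I := hmulI ha
          have hbI' : b ∈ I := hmulI hb
          have h7 := h5 haI'
          have h8 := h6 hbI'
          have : (⟨a + b, haI⟩ : I) = ⟨a, haI'⟩ + ⟨b, hbI'⟩ := rfl
          rw [this, TensorProduct.tmul_add]
          exact add_mem h7 h8
      exact h4 a (hQ a ha) ha.1
  have hfin : Module.Finite A (N ⊗[R] I) := by
    obtain ⟨k, f, hf⟩ := Module.Finite.exists_fin' R I
    have hs : Function.Surjective ((TensorProduct.AlgebraTensorModule.lTensor A N f) ∘ₗ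
        (TensorProduct.piScalarRight R A N (Fin k)).symm.toLinearMap) :=
      (LinearMap.lTensor_surjective N hf).comp (LinearEquiv.surjective _)
    exact Module.Finite.of_surjective _ hs
  rw [Ideal.iInf_pow_smul_eq_bot_of_isLocalRing _ (Ideal.IsPrime.ne_top inferInstance)] at key
  simpa using key

section
open TensorProduct
variable {R : Type} [CommRing R]
    (F : ℕ → Type) [∀ q, AddCommGroup (F q)] [∀ q, Module R (F q)]
    (dF : ∀ q : ℕ, F (q + 1) →ₗ[R] F q)

theorem aux_homotopy [∀ q, Module.Free R (F q)] {k : Type} [AddCommGroup k] [Module R k]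
    (ε : F 0 →ₗ[R] k)
    (hexact : ∀ q : ℕ, Function.Exact (dF (q + 1)) (dF q))
    (hexact0 : Function.Exact (dF 0) ε) (r : R) (hr : ∀ y : k, r • y = 0) (q : ℕ) :
    ∃ (h : F q →ₗ[R] F (q + 1)) (h' : F (q + 1) →ₗ[R] F (q + 2)),
      ∀ x, dF (q + 1) (h' x) + h (dF q x) = r • x := by
  have lift : ∀ (a b : ℕ) (f : F a →ₗ[R] F b), (∀ x, f x ∈ LinearMap.range (dF b)) →
      ∃ h : F a →ₗ[R] F (b + 1), ∀ x, dF b (h x) = f x := by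
    intro a b f hf
    obtain ⟨h, hh⟩ := Module.projective_lifting_property (dF b).rangeRestrict
      (f.codRestrict _ hf) (LinearMap.surjective_rangeRestrict _)
    exact ⟨h, fun x => congrArg Subtype.val (LinearMap.congr_fun hh x)⟩
  induction q with
  | zero =>
    obtain ⟨h, hh⟩ := lift 0 0 (r • LinearMap.id) (fun x => (hexact0 _).1 (by simp [hr]))
    obtain ⟨h', hh'⟩ := lift 1 1 (r • LinearMap.id - h ∘ₗ dF 0)
      (fun x => (hexact 0 _).1 (by simp [hh]))
    exact ⟨h, h', fun x => by rw [hh']; simp⟩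
  | succ q ih =>
    obtain ⟨h, h', hh⟩ := ih
    obtain ⟨h'', hh''⟩ := lift (q + 2) (q + 2) (r • LinearMap.id - h' ∘ₗ dF (q + 1))
      (fun x => (hexact (q + 1) _).1 (by
        have := hh (dF (q + 1) x)
        rw [(hexact q).apply_apply_eq_zero, map_zero, add_zero] at this
        simp [this]))
    exact ⟨h', h'', fun x => by rw [hh'']; simp⟩

theorem aux_max_inj [IsLocalRing R] [∀ q, Module.Free R (F q)]
    (ε : F 0 →ₗ[R] (R ⧸ IsLocalRing.maximalIdeal R))
    (hexact : ∀ q : ℕ, Function.Exact (dF (q + 1)) (dF q))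
    (hexact0 : Function.Exact (dF 0) ε) (hsurj : Function.Surjective ε)
    (N : Type) [AddCommGroup N] [Module R N]
    (h1 : Function.Exact ((dF 1).lTensor N) ((dF 0).lTensor N)) :
    Function.Injective ((IsLocalRing.maximalIdeal R).subtype.lTensor N) := by
  obtain ⟨φ, hφ⟩ := Module.projective_lifting_property
    (Submodule.mkQ (IsLocalRing.maximalIdeal R)) ε (Submodule.mkQ_surjective _)
  have hφ' : ∀ x, Submodule.Quotient.mk (φ x) = ε x := fun x => LinearMap.congr_fun hφ x
  have hK : Function.Injective ((LinearMap.range (dF 0)).subtype.lTensor N) := by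
    rw [injective_iff_map_eq_zero]
    intro x hx
    obtain ⟨y, rfl⟩ := LinearMap.lTensor_surjective N (dF 0).surjective_rangeRestrict x
    rw [← LinearMap.lTensor_comp_apply] at hx
    change (dF 0).lTensor N y = 0 at hx
    obtain ⟨z, rfl⟩ := (h1 _).1 hx
    rw [← LinearMap.lTensor_comp_apply]
    have : (dF 0).rangeRestrict ∘ₗ dF 1 = 0 := by
      ext x
      exact (hexact 0).apply_apply_eq_zero x
    rw [this]; simp
  refine aux_step (LinearMap.range (dF 0)) hK _ (Submodule.subtype_injective _) φ ?_ ?_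
  · intro g
    rw [Submodule.range_subtype, ← Submodule.Quotient.mk_eq_zero (IsLocalRing.maximalIdeal R), hφ',
      hexact0 g]
    rfl
  · intro b
    obtain ⟨g, hg⟩ := hsurj (Submodule.Quotient.mk b)
    rw [← hφ'] at hg
    exact ⟨⟨b - φ g, (Submodule.Quotient.eq _).1 hg.symm⟩, g, by simp⟩

end

theorem aux_support (R : Type) [CommRing R] (S : Type) [CommRing S] [Algebra R S]
    (M : Type) [AddCommGroup M] [Module R M] [Module S M] [IsScalarTower R S M]
    (F : ℕ → Type) [∀ q, AddCommGroup (F q)] [∀ q, Module R (F q)]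
    (dF : ∀ q : ℕ, F (q + 1) →ₗ[R] F q)
    (hexact : ∀ q : ℕ, Function.Exact (dF (q + 1)) (dF q)) (P : PrimeSpectrum S) (q : ℕ) :
    P ∉ Module.support S (torMod R S M F dF (q + 1)) ↔
      ∀ x, torD R S M F dF q x = 0 → ∃ s ∉ P.asIdeal, ∃ z, torD R S M F dF (q + 1) z = s • x := by
  rw [Module.notMem_support_iff']
  constructor
  · intro h x hx
    obtain ⟨s, hs, h'⟩ := h (Submodule.Quotient.mk ⟨x, hx⟩)
    refine ⟨s, hs, ?_⟩
    exact (Submodule.Quotient.mk_eq_zero _).1 h'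
  · intro h x
    obtain ⟨⟨x, hx⟩, rfl⟩ := Submodule.Quotient.mk_surjective _ x
    obtain ⟨s, hs, h'⟩ := h x hx
    exact ⟨s, hs, (Submodule.Quotient.mk_eq_zero _).2 h'⟩

theorem aux_exact_loc (R : Type) [CommRing R] (S : Type) [CommRing S] [Algebra R S]
    (M : Type) [AddCommGroup M] [Module R M] [Module S M] [IsScalarTower R S M]
    (F : ℕ → Type) [∀ q, AddCommGroup (F q)] [∀ q, Module R (F q)]
    (dF : ∀ q : ℕ, F (q + 1) →ₗ[R] F q)
    (hexact : ∀ q : ℕ, Function.Exact (dF (q + 1)) (dF q)) (P : PrimeSpectrum S) (q : ℕ)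
    (N : Type) [AddCommGroup N] [Module R N] [Module S N] [IsScalarTower R S N]
    (f : M →ₗ[S] N) [IsLocalizedModule P.asIdeal.primeCompl f] :
    (∀ x, torD R S M F dF q x = 0 →
        ∃ s ∉ P.asIdeal, ∃ z, torD R S M F dF (q + 1) z = s • x) ↔
      Function.Exact ((dF (q + 1)).lTensor N) ((dF q).lTensor N) := by
  let T := P.asIdeal.primeCompl
  let g : ∀ q, TensorProduct R M (F q) →ₗ[S] TensorProduct R N (F q) := fun q =>
    TensorProduct.AlgebraTensorModule.rTensor R (F q) f
  let D : ∀ q, TensorProduct R N (F (q + 1)) →ₗ[S] TensorProduct R N (F q) := torD R S N F dF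
  have hg : ∀ q, IsLocalizedModule T (g q) := fun q => inferInstance
  have hcomm : ∀ q x, D q (g (q + 1) x) = g q (torD R S M F dF q x) := by
    intro q x
    induction x with
    | zero => simp
    | add a b ha hb => simp only [map_add, ha, hb]
    | tmul a b => rfl
  have hDD : ∀ q x, D q (D (q + 1) x) = 0 := by
    intro q x
    induction x with
    | zero => simp
    | add a b ha hb => simp only [map_add, ha, hb, add_zero]
    | tmul a b =>
      change a ⊗ₜ[R] (dF q (dF (q + 1) b)) = _
      rw [(hexact q).apply_apply_eq_zero, TensorProduct.tmul_zero]
  have hcancel : ∀ q (s : T) (x y : TensorProduct R N (F q)), (s : S) • x = (s : S) • y → x = y :=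
    fun q s x y h => IsLocalizedModule.smul_injective (g q) s h
  have hzero : ∀ q x, g q x = 0 → ∃ s : T, (s : S) • x = 0 := fun q x h =>
    (IsLocalizedModule.eq_zero_iff T (g q)).1 h
  have hsur : ∀ q y, ∃ x, ∃ s : T, (s : S) • y = g q x := fun q y => by
    obtain ⟨⟨x, s⟩, h⟩ := IsLocalizedModule.surj T (g q) y
    exact ⟨x, s, h⟩
  change _ ↔ Function.Exact (D (q + 1)) (D q)
  constructor
  · intro h y
    constructor
    · intro hy
      obtain ⟨x, s, hs⟩ := hsur _ y
      have h1 : g q (torD R S M F dF q x) = 0 := by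
        rw [← hcomm, ← hs, map_smul, hy, smul_zero]
      obtain ⟨t, ht⟩ := hzero _ _ h1
      rw [← map_smul] at ht
      obtain ⟨u, hu, z, hz⟩ := h _ ht
      let v : T := ⟨u, hu⟩ * t * s
      have hv : (v : S) • y = D (q + 1) (g _ z) := by
        rw [hcomm, hz, map_smul, map_smul, ← hs, smul_smul, smul_smul]
        simp [v, mul_assoc]
      obtain ⟨w, hw⟩ := (Module.End.isUnit_iff _).1
        (IsLocalizedModule.map_units (g (q + 2)) v) |>.2 (g _ z)
      refine ⟨w, hcancel _ v _ _ ?_⟩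
      rw [hv, ← map_smul]
      exact congrArg _ hw
    · rintro ⟨z, rfl⟩
      exact hDD q z
  · intro h x hx
    obtain ⟨y, hy⟩ := (h (g _ x)).1 (by rw [hcomm, hx, map_zero])
    obtain ⟨z, s, hs⟩ := hsur _ y
    have h1 : g (q + 1) ((s : S) • x - torD R S M F dF (q + 1) z) = 0 := by
      rw [map_sub, map_smul, ← hy, ← hcomm, ← hs, map_smul, sub_self]
    obtain ⟨t, ht⟩ := hzero _ _ h1
    refine ⟨((t * s : T) : S), (t * s).2, (t : S) • z, ?_⟩
    rw [smul_sub, sub_eq_zero] at ht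
    rw [map_smul, ← ht, smul_smul]
    rfl

theorem aux_main (R : Type) [CommRing R] [IsNoetherianRing R] [IsLocalRing R]
    (S : Type) [CommRing S] [IsNoetherianRing S] [Algebra R S]
    (M : Type) [AddCommGroup M] [Module R M] [Module S M] [IsScalarTower R S M]
    [Module.Finite S M]
    (F : ℕ → Type) [∀ q, AddCommGroup (F q)] [∀ q, Module R (F q)]
    [∀ q, Module.Free R (F q)]
    (dF : ∀ q : ℕ, F (q + 1) →ₗ[R] F q)
    (ε : F 0 →ₗ[R] (R ⧸ IsLocalRing.maximalIdeal R))
    (hexact : ∀ q : ℕ, Function.Exact (dF (q + 1)) (dF q))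
    (hexact0 : Function.Exact (dF 0) ε) (hsurj : Function.Surjective ε) (q : ℕ) :
    Module.support S (torMod R S M F dF (q + 1)) ⊆ Module.support S (torMod R S M F dF 1) := by
  intro P
  contrapose
  intro h1
  by_cases hP : ∀ r ∈ IsLocalRing.maximalIdeal R, algebraMap R S r ∈ P.asIdeal
  · let T := P.asIdeal.primeCompl
    let A := Localization.AtPrime P.asIdeal
    let N := LocalizedModule T M
    have h2 := (aux_support R S M F dF hexact P 0).1 h1
    have h3 := (aux_exact_loc R S M F dF hexact P 0 N (LocalizedModule.mkLinearMap T M)).1 h2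
    have h4 := aux_max_inj F dF ε hexact hexact0 hsurj N h3
    have : IsScalarTower R A N := IsScalarTower.to₁₃₄ R S A N
    have : IsNoetherianRing A := IsLocalization.isNoetherianRing T A inferInstance
    have : Module.Finite A N := Module.Finite.of_isLocalizedModule T (LocalizedModule.mkLinearMap T M)
    have h5 : Module.Flat R N := aux_flat (A := A) (fun r hr => by
      rw [IsScalarTower.algebraMap_apply R S A]
      exact (IsLocalization.AtPrime.to_map_mem_maximal_iff A P.asIdeal _).2 (hP r hr)) h4
    exact (aux_support R S M F dF hexact P q).2
      ((aux_exact_loc R S M F dF hexact P q N (LocalizedModule.mkLinearMap T M)).2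
        (Module.Flat.lTensor_exact N (hexact q)))
  · push Not at hP
    obtain ⟨r, hr, hrP⟩ := hP
    obtain ⟨h, h', hh⟩ := aux_homotopy F dF ε hexact hexact0 r (fun y => by
      obtain ⟨y, rfl⟩ := Submodule.Quotient.mk_surjective _ y
      rw [← Submodule.Quotient.mk_smul, Submodule.Quotient.mk_eq_zero]
      exact Ideal.mul_mem_right _ _ hr) q
    refine (aux_support R S M F dF hexact P q).2 fun x hx => ⟨_, hrP, h'.lTensor M x, ?_⟩
    have key : (dF (q + 1)).lTensor M (h'.lTensor M x) + h.lTensor M ((dF q).lTensor M x)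
        = r • x := by
      rw [← LinearMap.lTensor_comp_apply, ← LinearMap.lTensor_comp_apply, ← LinearMap.add_apply,
        ← LinearMap.lTensor_add]
      have : dF (q + 1) ∘ₗ h' + h ∘ₗ dF q = r • LinearMap.id := by
        ext x; exact hh x
      rw [this, LinearMap.lTensor_smul, LinearMap.lTensor_id]; rfl
    have hx' : (dF q).lTensor M x = 0 := hx
    rw [hx', map_zero, add_zero] at key
    rw [algebraMap_smul]
    exact key

open MvPolynomial in
/-- Let `(R, 𝔪)` be a Noetherian local ring, `S := R[X_1, …, X_n]` a polynomial ring
graded with `deg X_i = w i > 0` (and `R` in degree `0`), and `M` a finitely generated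
graded `S`-module.  `Tor_q^R(M, R/𝔪)` is computed from any resolution of `R/𝔪` by finite
free `R`-modules, with its natural `S`-module structure through `M`.  Then for every
`q ≥ 1`, `Supp_S (Tor_q^R(M, R/𝔪)) ⊆ Supp_S (Tor_1^R(M, R/𝔪))`. -/
theorem support_tor_subset_support_tor_one
    (R : Type) [CommRing R] [IsNoetherianRing R] [IsLocalRing R]
    {n : ℕ} (w : Fin n → ℤ) (hw : ∀ i, 0 < w i)
    (M : Type) [AddCommGroup M]
    [Module (MvPolynomial (Fin n) R) M] [Module R M]
    [IsScalarTower R (MvPolynomial (Fin n) R) M]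
    [Module.Finite (MvPolynomial (Fin n) R) M]
    (ℳ : ℤ → AddSubgroup M) [DirectSum.Decomposition ℳ]
    [SetLike.GradedSMul (weightedHomogeneousSubmodule R w) ℳ]
    (F : ℕ → Type) [∀ q, AddCommGroup (F q)] [∀ q, Module R (F q)]
    [∀ q, Module.Free R (F q)] [∀ q, Module.Finite R (F q)]
    (dF : ∀ q : ℕ, F (q + 1) →ₗ[R] F q)
    (ε : F 0 →ₗ[R] (R ⧸ IsLocalRing.maximalIdeal R))
    (hexact : ∀ q : ℕ, Function.Exact (dF (q + 1)) (dF q))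
    (hexact0 : Function.Exact (dF 0) ε) (hsurj : Function.Surjective ε) :
    ∀ q : ℕ, 1 ≤ q →
      Module.support (MvPolynomial (Fin n) R)
          (torMod R (MvPolynomial (Fin n) R) M F dF q) ⊆
        Module.support (MvPolynomial (Fin n) R)
          (torMod R (MvPolynomial (Fin n) R) M F dF 1) := by
  intro q hq
  obtain ⟨q, rfl⟩ := Nat.exists_eq_add_of_le' hq
  exact aux_main R (MvPolynomial (Fin n) R) M F dF ε hexact hexact0 hsurj q
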